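/- arXiv:1902.08179 — 6 statements merged into one kernel-verified Lean document; each statement's English description precedes it below -/
import Mathlib

section
/- Let d, t, b be positive integers, L ≥ 0, and let f₀, f₁, …, f_t : ℝ^d → ℝ be differentiable functions such that ∇f_k is L-Lipschitz for every 1 ≤ k ≤ t. Fix points x, u₁, …, u_t ∈ ℝ^d. Let k₁, …, k_b be indices drawn independently and uniformly at random from {1, …, t}, and define the variance-reduced stochastic gradient g = ∇f₀(x) + Σ_{k=1}^t ∇f_k(u_k) + (t/b) Σ_{j=1}^b (∇f_{k_j}(x) − ∇f_{k_j}(u_{k_j})). Then E[‖g − Σ_{k=0}^t ∇f_k(x)‖²] ≤ (t²/b) · L² · max_{1 ≤ k ≤ t} ‖x − u_k‖². -/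
open scoped BigOperators

/-!
Write `v k = ∇f_k(x) - ∇f_k(u_k)` and let `w k = v k - t⁻¹ ∑ v` be its centring. The error of the
estimator is `(t/b) ∑ j, w (κ j)`. Since `∑ w = 0` and the indices are independent, the cross terms
average out, so the second moment of `∑ j, w (κ j)` is `b` times the mean of `‖w k‖²`
(`sum_norm_sq_sum_of_sum_eq_zero`). The variance `∑ ‖w k‖²` is at most the second moment `∑ ‖v k‖²`
(`sum_norm_sq_sub_mean_le`), and the Lipschitz bound gives `‖v k‖² ≤ L² max_k ‖x - u k‖²`.
-/

/-- Additivity of variance for iid uniform samples of a centred vector family, cleared of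
denominators. -/
lemma sum_norm_sq_sum_of_sum_eq_zero {E : Type*} [NormedAddCommGroup E] [InnerProductSpace ℝ E]
    {t : ℕ} (w : Fin t → E) (hw : ∑ k, w k = 0) (b : ℕ) :
    (t : ℝ) * ∑ κ : Fin b → Fin t, ‖∑ j, w (κ j)‖ ^ 2
      = (b : ℝ) * (t : ℝ) ^ b * ∑ k, ‖w k‖ ^ 2 := by
  induction b with
  | zero => simp
  | succ b ih =>
    -- Split off the first sample; the cross terms sum to `⟪∑ w, ·⟫ = 0`.
    have split : ∑ κ : Fin (b + 1) → Fin t, ‖∑ j, w (κ j)‖ ^ 2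
        = ∑ κ : Fin b → Fin t, ∑ a : Fin t, ‖w a + ∑ j, w (κ j)‖ ^ 2 := by
      rw [← (Fin.consEquiv (fun _ => Fin t)).sum_comp, Fintype.sum_prod_type_right]
      simp [Fin.consEquiv, Fin.sum_univ_succ]
    have inner_step (s : E) :
        ∑ a : Fin t, ‖w a + s‖ ^ 2 = ∑ a, ‖w a‖ ^ 2 + (t : ℝ) * ‖s‖ ^ 2 := by
      have cross : ∑ a, inner ℝ (w a) s = 0 := by
        rw [← sum_inner, hw, inner_zero_left]
      simp only [norm_add_sq_real, Finset.sum_add_distrib, ← Finset.mul_sum, cross]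
      simp
    rw [split]
    simp only [inner_step, Finset.sum_add_distrib, ← Finset.mul_sum, ih]
    simp
    ring

lemma sum_norm_sq_sub_mean_le {E : Type*} [NormedAddCommGroup E] [InnerProductSpace ℝ E]
    {t : ℕ} (ht : 0 < t) (v : Fin t → E) :
    ∑ k, ‖v k - (t : ℝ)⁻¹ • ∑ i, v i‖ ^ 2 ≤ ∑ k, ‖v k‖ ^ 2 := by
  have ht' : (0 : ℝ) < t := by exact_mod_cast ht
  have h : ∑ k, ‖v k - (t : ℝ)⁻¹ • ∑ i, v i‖ ^ 2
      = ∑ k, ‖v k‖ ^ 2 - (t : ℝ)⁻¹ * ‖∑ i, v i‖ ^ 2 := by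
    simp only [norm_sub_sq_real, Finset.sum_add_distrib, Finset.sum_sub_distrib, ← Finset.mul_sum,
      ← sum_inner, inner_smul_right, real_inner_self_eq_norm_sq, norm_smul, mul_pow]
    simp
    field_simp
    ring
  rw [h]
  have : 0 ≤ (t : ℝ)⁻¹ * ‖∑ i, v i‖ ^ 2 := by positivity
  linarith

/-- Expected squared deviation of the variance-reduced stochastic gradient,
where the batch indices `κ : Fin b → Fin t` are iid uniform on `{1, …, t}`
(so the expectation is the average over all `t^b` choices of `κ`). -/
theorem variance_reduced_gradient_expected_bound
    (d t b : ℕ) (hd : 0 < d) (ht : 0 < t) (hb : 0 < b)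
    (L : ℝ) (hL : 0 ≤ L)
    (f0 : EuclideanSpace ℝ (Fin d) → ℝ)
    (f : Fin t → EuclideanSpace ℝ (Fin d) → ℝ)
    (hf0 : Differentiable ℝ f0)
    (hf : ∀ k, Differentiable ℝ (f k))
    (hlip : ∀ k, ∀ x y : EuclideanSpace ℝ (Fin d),
      ‖gradient (f k) x - gradient (f k) y‖ ≤ L * ‖x - y‖)
    (x : EuclideanSpace ℝ (Fin d)) (u : Fin t → EuclideanSpace ℝ (Fin d)) :
    (∑ κ : Fin b → Fin t,
        ‖(gradient f0 x + ∑ k, gradient (f k) (u k)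
            + ((t : ℝ) / (b : ℝ)) •
              ∑ j, (gradient (f (κ j)) x - gradient (f (κ j)) (u (κ j))))
          - (gradient f0 x + ∑ k, gradient (f k) x)‖ ^ 2) / (t : ℝ) ^ b
      ≤ (t : ℝ) ^ 2 / (b : ℝ) * L ^ 2 * ⨆ k : Fin t, ‖x - u k‖ ^ 2 := by
  have ht' : (0 : ℝ) < t := by exact_mod_cast ht
  have hb' : (0 : ℝ) < b := by exact_mod_cast hb
  set v : Fin t → EuclideanSpace ℝ (Fin d) :=
    fun k => gradient (f k) x - gradient (f k) (u k) with hv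
  set w : Fin t → EuclideanSpace ℝ (Fin d) := fun k => v k - (t : ℝ)⁻¹ • ∑ i, v i with hw
  set M : ℝ := ⨆ k : Fin t, ‖x - u k‖ ^ 2 with hM
  have w_sum : ∑ k, w k = 0 := by
    simp only [hw, Finset.sum_sub_distrib, Finset.sum_const, Finset.card_univ, Fintype.card_fin]
    rw [← Nat.cast_smul_eq_nsmul ℝ, smul_smul, mul_inv_cancel₀ ht'.ne', one_smul, sub_self]
  have error_eq (κ : Fin b → Fin t) :
      (gradient f0 x + ∑ k, gradient (f k) (u k)
            + ((t : ℝ) / (b : ℝ)) •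
              ∑ j, (gradient (f (κ j)) x - gradient (f (κ j)) (u (κ j))))
          - (gradient f0 x + ∑ k, gradient (f k) x)
        = ((t : ℝ) / (b : ℝ)) • ∑ j, w (κ j) := by
    have mean_part : ((t : ℝ) / (b : ℝ)) • ∑ j, w (κ j)
        = ((t : ℝ) / (b : ℝ)) • ∑ j, v (κ j) - ∑ i, v i := by
      simp only [hw, Finset.sum_sub_distrib, Finset.sum_const, Finset.card_univ,
        Fintype.card_fin]
      rw [smul_sub, ← Nat.cast_smul_eq_nsmul ℝ, smul_smul, smul_smul,
        show (t : ℝ) / b * b * (t : ℝ)⁻¹ = 1 by field_simp, one_smul]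
    have v_sum : ∑ i, v i = ∑ k, gradient (f k) x - ∑ k, gradient (f k) (u k) :=
      Finset.sum_sub_distrib _ _
    rw [mean_part, v_sum]
    abel
  have v_le (k : Fin t) : ‖v k‖ ^ 2 ≤ L ^ 2 * M := by
    have h1 : ‖x - u k‖ ^ 2 ≤ M :=
      le_ciSup (f := fun k => ‖x - u k‖ ^ 2) (Set.finite_range _).bddAbove k
    calc ‖v k‖ ^ 2 ≤ (L * ‖x - u k‖) ^ 2 := by gcongr; exact hlip k x (u k)
      _ = L ^ 2 * ‖x - u k‖ ^ 2 := by ring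
      _ ≤ L ^ 2 * M := by gcongr
  have w_le : ∑ k, ‖w k‖ ^ 2 ≤ t * (L ^ 2 * M) := by
    refine (sum_norm_sq_sub_mean_le ht v).trans ((Finset.sum_le_sum fun k _ => v_le k).trans ?_)
    simp
  have key := sum_norm_sq_sum_of_sum_eq_zero w w_sum b
  have S_le : ∑ κ : Fin b → Fin t, ‖∑ j, w (κ j)‖ ^ 2 ≤ b * (t : ℝ) ^ b * (L ^ 2 * M) := by
    refine le_of_mul_le_mul_left ?_ ht'
    calc _ = (b : ℝ) * (t : ℝ) ^ b * ∑ k, ‖w k‖ ^ 2 := key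
      _ ≤ (b : ℝ) * (t : ℝ) ^ b * (t * (L ^ 2 * M)) := by gcongr
      _ = _ := by ring
  simp only [error_eq, norm_smul, mul_pow, ← Finset.mul_sum, Real.norm_eq_abs, sq_abs]
  rw [div_le_iff₀ (by positivity)]
  calc _ ≤ ((t : ℝ) / b) ^ 2 * (b * (t : ℝ) ^ b * (L ^ 2 * M)) := by gcongr
    _ = _ := by field_simp
end

section
/- Let F : ℝ^d → ℝ be convex and twice continuously differentiable, let θ₀ ∈ ℝ^d, and let m > 0, r > 0, ε ≥ 0 with ε/m < r. Suppose ‖∇F(θ₀)‖ ≤ ε and ∇²F(θ) ⪰ m·I_d (i.e. ⟨∇²F(θ)v, v⟩ ≥ m‖v‖² for all v) for every θ with ‖θ − θ₀‖ ≤ r. Then every minimizer θ⋆ of F over ℝ^d satisfies ‖θ⋆ − θ₀‖ ≤ ε/m. -/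
/-!
Restrict `F` to the segment from `θ₀` to a minimizer `θstar`, setting `v = θstar - θ₀` and
`g t = F (θ₀ + t • v)`. If `‖v‖ > ε / m`, pick `ρ` with `ε / m < ρ < min ‖v‖ r` and put
`s = ρ / ‖v‖ < 1`. The Hessian bound on `[0, s]`, the mean value theorem and Cauchy–Schwarz give
`g' s ≥ g' 0 + s m ‖v‖² ≥ (m ρ - ε) ‖v‖ > 0`, while convexity and minimality of `g` at `1` give
`g' s ≤ (g 1 - g s) / (1 - s) ≤ 0`, a contradiction.
-/

/-- If `F` is convex and `C²`, `‖∇F(θ₀)‖ ≤ ε`, and the Hessian of `F` is `⪰ m·I` on the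
ball of radius `r` around `θ₀`, with `ε/m < r`, then every minimizer of `F` lies within
distance `ε/m` of `θ₀`. -/
theorem minimizer_close_of_grad_small
    (d : ℕ) (hd : 0 < d)
    (F : EuclideanSpace ℝ (Fin d) → ℝ)
    (hconv : ConvexOn ℝ Set.univ F)
    (hF : ContDiff ℝ 2 F)
    (θ₀ : EuclideanSpace ℝ (Fin d))
    (m r ε : ℝ) (hm : 0 < m) (hr : 0 < r) (hε : 0 ≤ ε) (hεm : ε / m < r)
    (hgrad : ‖gradient F θ₀‖ ≤ ε)
    (hhess : ∀ θ : EuclideanSpace ℝ (Fin d), ‖θ - θ₀‖ ≤ r →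
      ∀ v : EuclideanSpace ℝ (Fin d),
        m * ‖v‖ ^ 2 ≤ iteratedFDeriv ℝ 2 F θ ![v, v]) :
    ∀ θstar : EuclideanSpace ℝ (Fin d), (∀ θ, F θstar ≤ F θ) →
      ‖θstar - θ₀‖ ≤ ε / m := by
  intro θstar hmin
  by_contra! hlt
  set v := θstar - θ₀ with hv
  obtain ⟨ρ, hρ1, hρ2⟩ := exists_between (lt_min hlt hεm)
  obtain ⟨hρv, hρr⟩ := lt_min_iff.1 hρ2
  have hρ0 : 0 < ρ := (div_nonneg hε hm.le).trans_lt hρ1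
  have hv0 : 0 < ‖v‖ := hρ0.trans hρv
  have hmρ : ε < ρ * m := (div_lt_iff₀ hm).1 hρ1
  set s := ρ / ‖v‖ with hs
  have hs0 : 0 < s := div_pos hρ0 hv0
  have hs1 : s < 1 := (div_lt_one hv0).2 hρv
  have hsv : s * ‖v‖ = ρ := div_mul_cancel₀ _ hv0.ne'
  have hline (t : ℝ) : HasDerivAt (fun t : ℝ => θ₀ + t • v) v t := by
    simpa using ((hasDerivAt_id t).smul_const v).const_add θ₀
  have hg (t : ℝ) :
      HasDerivAt (fun t : ℝ => F (θ₀ + t • v)) (fderiv ℝ F (θ₀ + t • v) v) t :=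
    ((hF.differentiable (by norm_num)) _).hasFDerivAt.comp_hasDerivAt t (hline t)
  have hdF : Differentiable ℝ (fderiv ℝ F) :=
    (hF.fderiv_right (m := 1) (by norm_num)).differentiable (by norm_num)
  have hg' (t : ℝ) : HasDerivAt (fun t : ℝ => fderiv ℝ F (θ₀ + t • v) v)
      (fderiv ℝ (fderiv ℝ F) (θ₀ + t • v) v v) t := by
    simpa using ((hdF _).hasFDerivAt.comp_hasDerivAt t (hline t)).clm_apply
      (hasDerivAt_const t v)
  have hgconv : ConvexOn ℝ Set.univ (fun t : ℝ => F (θ₀ + t • v)) := by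
    have h := hconv.comp_affineMap (AffineMap.lineMap θ₀ θstar : ℝ →ᵃ[ℝ] _)
    have he : F ∘ (AffineMap.lineMap θ₀ θstar : ℝ →ᵃ[ℝ] _) = fun t : ℝ => F (θ₀ + t • v) := by
      funext t
      simp [AffineMap.lineMap_apply, hv, add_comm]
    rwa [he, Set.preimage_univ] at h
  have hnonpos : fderiv ℝ F (θ₀ + s • v) v ≤ 0 := by
    refine (hgconv.le_slope_of_hasDerivAt (Set.mem_univ s) (Set.mem_univ 1) hs1 (hg s)).trans ?_
    rw [slope_def_field]
    refine div_nonpos_of_nonpos_of_nonneg ?_ (by linarith)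
    have h1 : θ₀ + (1 : ℝ) • v = θstar := by simp [hv]
    rw [h1]
    linarith [hmin (θ₀ + s • v)]
  obtain ⟨c, ⟨hc0, hcs⟩, hc⟩ := exists_hasDerivAt_eq_slope
    (fun t : ℝ => fderiv ℝ F (θ₀ + t • v) v) _ hs0
    (fun t _ => (hg' t).continuousAt.continuousWithinAt) (fun t _ => hg' t)
  have hH := hhess (θ₀ + c • v) (by
    rw [add_sub_cancel_left, norm_smul, Real.norm_of_nonneg hc0.le]
    nlinarith) v
  rw [iteratedFDeriv_two_apply] at hH
  simp only [Matrix.cons_val_zero, Matrix.cons_val_one] at hH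
  rw [hc, sub_zero, le_div_iff₀ hs0, zero_smul, add_zero] at hH
  have h0 : -(ε * ‖v‖) ≤ fderiv ℝ F θ₀ v := by
    have hn : ‖fderiv ℝ F θ₀‖ ≤ ε := by
      rwa [gradient, LinearIsometryEquiv.norm_map] at hgrad
    exact neg_le_of_abs_le ((fderiv ℝ F θ₀).le_of_opNorm_le hn v)
  have hprod : m * ‖v‖ ^ 2 * s = ρ * m * ‖v‖ := by
    rw [← hsv]
    ring
  nlinarith [mul_lt_mul_of_pos_right hmρ hv0]
end

section
/- Let F : ℝ^d → ℝ be convex and twice continuously differentiable with a minimizer θ⋆ ∈ ℝ^d and F(θ⋆) = 0. Let m > 0 and ρ > 0, and suppose ∇²F(θ) ⪰ m·I_d (i.e. ⟨∇²F(θ)v, v⟩ ≥ m‖v‖² for all v) for every θ with ‖θ − θ⋆‖ ≤ ρ. Then for every θ with ‖θ − θ⋆‖ ≥ ρ, F(θ) ≥ (m/2)ρ² + mρ(‖θ − θ⋆‖ − ρ). -/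
/-!
Along the ray `φ t = F (θ⋆ + t • u)` with `u` the unit vector from `θ⋆` towards `θ`, the Hessian
bound reads `φ'' ≥ m` on `[0, ρ]`, and `φ' 0 = 0` because `θ⋆` is a minimizer. Integrating twice
gives `φ' ρ ≥ m ρ` and `φ ρ ≥ m ρ² / 2`; beyond `ρ` the convex function `φ` lies above its
tangent line at `ρ`.
-/

/-- One-dimensional form of the growth bound: `φ'` and `φ''` are the first two derivatives
of `φ`, with `φ'' ≥ m` required on `[0, ρ]` only. -/
lemma linear_growth_on_ray {φ φ' φ'' : ℝ → ℝ} {m ρ r : ℝ}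
    (hconv : ConvexOn ℝ Set.univ φ)
    (h1 : ∀ t, HasDerivAt φ (φ' t) t) (h2 : ∀ t, HasDerivAt φ' (φ'' t) t)
    (h0 : φ 0 = 0) (h0' : φ' 0 = 0) (hρ : 0 < ρ) (hr : ρ ≤ r)
    (hm : ∀ t ∈ Set.Icc 0 ρ, m ≤ φ'' t) :
    m / 2 * ρ ^ 2 + m * ρ * (r - ρ) ≤ φ r := by
  have hd1 : ∀ t, HasDerivAt (fun t => φ' t - m * t) (φ'' t - m) t := fun t => by
    exact ((h2 t).sub ((hasDerivAt_id' t).const_mul m)).congr_deriv (by ring)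
  have hmono1 : MonotoneOn (fun t => φ' t - m * t) (Set.Icc 0 ρ) := by
    refine monotoneOn_of_deriv_nonneg (convex_Icc 0 ρ)
      (fun t _ => (hd1 t).continuousAt.continuousWithinAt)
      (fun t _ => (hd1 t).differentiableAt.differentiableWithinAt) fun t ht => ?_
    rw [(hd1 t).deriv]
    linarith [hm t (interior_subset ht)]
  have hb1 : ∀ t ∈ Set.Icc 0 ρ, m * t ≤ φ' t := fun t ht => by
    have := hmono1 (Set.left_mem_Icc.2 hρ.le) ht ht.1
    simp only [h0'] at this
    linarith
  have hd2 : ∀ t, HasDerivAt (fun t => φ t - m / 2 * t ^ 2) (φ' t - m * t) t := fun t => by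
    exact ((h1 t).sub ((hasDerivAt_pow 2 t).const_mul (m / 2))).congr_deriv (by
      norm_num
      ring)
  have hmono2 : MonotoneOn (fun t => φ t - m / 2 * t ^ 2) (Set.Icc 0 ρ) := by
    refine monotoneOn_of_deriv_nonneg (convex_Icc 0 ρ)
      (fun t _ => (hd2 t).continuousAt.continuousWithinAt)
      (fun t _ => (hd2 t).differentiableAt.differentiableWithinAt) fun t ht => ?_
    rw [(hd2 t).deriv]
    linarith [hb1 t (interior_subset ht)]
  have hb2 : m / 2 * ρ ^ 2 ≤ φ ρ := by
    have := hmono2 (Set.left_mem_Icc.2 hρ.le) (Set.right_mem_Icc.2 hρ.le) hρ.le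
    simp only [h0] at this
    linarith
  rcases hr.eq_or_lt with rfl | hlt
  · simpa using hb2
  have hs := hconv.le_slope_of_hasDerivAt (Set.mem_univ ρ) (Set.mem_univ r) hlt (h1 ρ)
  rw [slope_def_field, le_div_iff₀ (sub_pos.2 hlt)] at hs
  have := mul_le_mul_of_nonneg_right (hb1 ρ (Set.right_mem_Icc.2 hρ.le)) (sub_nonneg.2 hr)
  linarith


/-- Linear growth of a convex `C²` function outside a ball on which its Hessian
is `⪰ m·I`, when the function is minimized at the center with value `0`. -/
theorem convex_linear_growth_of_local_strong_convexity
    (d : ℕ) (hd : 0 < d)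
    (F : EuclideanSpace ℝ (Fin d) → ℝ)
    (hconv : ConvexOn ℝ Set.univ F)
    (hF : ContDiff ℝ 2 F)
    (θstar : EuclideanSpace ℝ (Fin d))
    (hmin : ∀ θ, F θstar ≤ F θ) (hzero : F θstar = 0)
    (m ρ : ℝ) (hm : 0 < m) (hρ : 0 < ρ)
    (hhess : ∀ θ : EuclideanSpace ℝ (Fin d), ‖θ - θstar‖ ≤ ρ →
      ∀ v : EuclideanSpace ℝ (Fin d),
        m * ‖v‖ ^ 2 ≤ iteratedFDeriv ℝ 2 F θ ![v, v]) :
    ∀ θ : EuclideanSpace ℝ (Fin d), ρ ≤ ‖θ - θstar‖ →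
      m / 2 * ρ ^ 2 + m * ρ * (‖θ - θstar‖ - ρ) ≤ F θ := by
  intro θ hθ
  set r := ‖θ - θstar‖ with hrdef
  have hr : 0 < r := hρ.trans_le hθ
  set u := r⁻¹ • (θ - θstar) with hu
  have hnu : ‖u‖ = 1 := by
    rw [hu, norm_smul, norm_inv, Real.norm_of_nonneg hr.le, ← hrdef, inv_mul_cancel₀ hr.ne']
  have hend : θstar + r • u = θ := by
    rw [hu, smul_inv_smul₀ hr.ne']
    abel
  have hline : ∀ t : ℝ, HasDerivAt (fun t : ℝ => θstar + t • u) u t := fun t => by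
    simpa using ((hasDerivAt_id t).smul_const u).const_add θstar
  have hdF : Differentiable ℝ F := hF.differentiable (by norm_num)
  have hdF' : Differentiable ℝ (fderiv ℝ F) :=
    (hF.fderiv_right (m := 1) (by norm_num)).differentiable (by norm_num)
  have hconvφ : ConvexOn ℝ Set.univ (fun t : ℝ => F (θstar + t • u)) := by
    have h := hconv.comp_affineMap (AffineMap.lineMap (k := ℝ) θstar (θstar + u))
    simpa [Function.comp_def, AffineMap.lineMap_apply, add_comm] using h
  have hcrit : fderiv ℝ F θstar = 0 :=
    IsLocalMin.fderiv_eq_zero (Filter.Eventually.of_forall hmin)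
  have key := linear_growth_on_ray (φ := fun t => F (θstar + t • u))
    (φ' := fun t => fderiv ℝ F (θstar + t • u) u)
    (φ'' := fun t => fderiv ℝ (fderiv ℝ F) (θstar + t • u) u u) (m := m) (ρ := ρ) (r := r)
    hconvφ
    (fun t => (hdF _).hasFDerivAt.comp_hasDerivAt t (hline t))
    (fun t => by
      have h := (hdF' (θstar + t • u)).hasFDerivAt.comp_hasDerivAt t (hline t)
      simpa using h.clm_apply (hasDerivAt_const t u))
    (by simpa using hzero) (by simp [hcrit]) hρ hθ
    (fun t ht => by
      have h := hhess (θstar + t • u)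
        (by simpa [norm_smul, hnu, abs_of_nonneg ht.1] using ht.2) u
      simpa [iteratedFDeriv_two_apply, hnu] using h)
  simpa only [hend] using key
end

section
/- For all real numbers x and c, φ(x + c)(1 − φ(x + c)) ≥ e^{−|c|} · φ(x)(1 − φ(x)). -/
/-!
The product `φ(x)(1 - φ(x))` equals `1 / (2 + e^x + e^{-x})`. Shifting `x` by `c` multiplies
`e^x` by `e^c` and `e^{-x}` by `e^{-c}`, both at most `e^{|c|}`, and the constant term satisfies
`2 ≤ 2 e^{|c|}`; hence the denominator grows by a factor of at most `e^{|c|}`.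
-/

/-- The logistic function `φ(x) = 1/(1 + e^{−x})`. -/
noncomputable def logistic (x : ℝ) : ℝ := 1 / (1 + Real.exp (-x))

lemma logistic_mul_one_sub (x : ℝ) :
    logistic x * (1 - logistic x) = 1 / (2 + Real.exp x + Real.exp (-x)) := by
  have h := Real.exp_pos x
  rw [logistic, Real.exp_neg]
  field_simp
  ring

lemma shifted_denom_le (x c : ℝ) :
    2 + Real.exp (x + c) + Real.exp (-(x + c))
      ≤ Real.exp |c| * (2 + Real.exp x + Real.exp (-x)) := by
  have h0 : 1 ≤ Real.exp |c| := Real.one_le_exp (abs_nonneg c)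
  have h1 : Real.exp (x + c) ≤ Real.exp |c| * Real.exp x := by
    rw [← Real.exp_add]
    exact Real.exp_le_exp.mpr (by linarith [le_abs_self c])
  have h2 : Real.exp (-(x + c)) ≤ Real.exp |c| * Real.exp (-x) := by
    rw [← Real.exp_add]
    exact Real.exp_le_exp.mpr (by linarith [neg_le_abs c])
  linarith

/-- `φ(x+c)(1−φ(x+c)) ≥ e^{−|c|} φ(x)(1−φ(x))` for all real `x`, `c`. -/
theorem logistic_deriv_ratio_bound (x c : ℝ) :
    Real.exp (-|c|) * (logistic x * (1 - logistic x))
      ≤ logistic (x + c) * (1 - logistic (x + c)) := by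
  rw [logistic_mul_one_sub, logistic_mul_one_sub, Real.exp_neg |c|, inv_mul_eq_div, div_div,
    mul_comm _ (Real.exp |c|)]
  exact one_div_le_one_div_of_le (by positivity) (shifted_denom_le x c)
end

section
/- Let μ be a probability measure on ℝ^d, let θ₀ ∈ ℝ^d, and let A > 0 and 0 < k ≤ 1 satisfy A ≥ e·k². Suppose that for every γ ≥ 0, μ({θ : ‖θ − θ₀‖ ≥ γ}) ≤ A e^{−kγ}. Then ∫ ‖θ − θ₀‖² dμ(θ) ≤ ( (2 + 1/k) · log(A/k²) )². -/
open MeasureTheory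

/-!
Let `a = log A`, which is nonnegative because the tail bound at `γ = 0` reads `1 ≤ A`. The tail
probability is at most `1` below the crossover point `t₀ = a / k` and at most `A e^{-kt}` above it,
so the layer-cake formula gives
`∫ ‖θ - θ₀‖² dμ ≤ ∫_0^{t₀} 2t dt + ∫_{t₀}^∞ 2t A e^{-kt} dt = ((a + 1)² + 1) / k²`.
It remains to compare this with `(2k + 1)² L² / k²`, where `L = log (A / k²) = a - 2 log k ≥ 1`.
This is elementary, by cases on the size of `-log k` (`scalar_bound`).
-/

/-- The last step of the argument, with `a = log A` and `b = -log k`, so that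
`a + 2 * b = log (A / k ^ 2)`. -/
lemma scalar_bound (a b k : ℝ) (ha : 0 ≤ a) (hb : 0 ≤ b) (hk : k = Real.exp (-b))
    (hL : 1 ≤ a + 2 * b) :
    (a + 1) ^ 2 + 1 ≤ ((2 * k + 1) * (a + 2 * b)) ^ 2 := by
  have hk0 : 0 < k := hk ▸ Real.exp_pos _
  obtain ⟨L, hLdef⟩ : ∃ L, L = a + 2 * b := ⟨_, rfl⟩
  have haL : a = L - 2 * b := by linarith
  rw [← hLdef] at hL ⊢
  rcases le_total b (1 / 2) with h | h
  · -- Here `k ≥ 1 - b`; with `c = 1 - 2b ∈ [0, 1]` use `L + c ≤ (1 + c) L` and `1 ≤ L²`.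
    have hkb : 1 - b ≤ k := by
      have := Real.add_one_le_exp (-b)
      rw [hk]; linarith
    have h1 : (a + 1) ^ 2 ≤ ((2 - 2 * b) * L) ^ 2 := by
      apply pow_le_pow_left₀ (by linarith)
      nlinarith
    have h2 : ((3 - 2 * b) * L) ^ 2 ≤ ((2 * k + 1) * L) ^ 2 := by
      apply pow_le_pow_left₀ (by nlinarith)
      nlinarith
    have h3 : 1 ≤ L ^ 2 := by nlinarith
    nlinarith
  · rcases le_total b 1 with hb1 | hb1
    · -- Here `k ≥ e⁻¹ > 1/4`, so `(2k + 1)² > 2`, while `a + 1 ≤ L`.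
      have hkb : (1 / 4 : ℝ) ≤ k := by
        have h1 : Real.exp (-1) ≤ k := by rw [hk]; exact Real.exp_le_exp.2 (by linarith)
        have h2 := Real.exp_neg_one_gt_d9
        linarith
      have h1 : (a + 1) ^ 2 ≤ L ^ 2 := pow_le_pow_left₀ (by linarith) (by linarith) 2
      have h3 : 1 ≤ L ^ 2 := by nlinarith
      have h4 : 2 ≤ (2 * k + 1) ^ 2 := by nlinarith
      rw [mul_pow]
      nlinarith
    · -- Here `a + 1 ≤ L - 1`, and the factor `2k + 1` is not needed.
      have h1 : (a + 1) ^ 2 ≤ (L - 1) ^ 2 := pow_le_pow_left₀ (by linarith) (by linarith) 2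
      have h2 : L ^ 2 ≤ ((2 * k + 1) * L) ^ 2 :=
        pow_le_pow_left₀ (by linarith) (by nlinarith) 2
      nlinarith

lemma hasDerivAt_tail_primitive (A k : ℝ) (hk : 0 < k) (t : ℝ) :
    HasDerivAt (fun t : ℝ => -(A * Real.exp (-k * t) * (2 * t / k + 2 / k ^ 2)))
      (A * Real.exp (-k * t) * (2 * t)) t := by
  have h1 : HasDerivAt (fun t : ℝ => Real.exp (-k * t)) (Real.exp (-k * t) * (-k * 1)) t :=
    ((hasDerivAt_id t).const_mul (-k)).exp
  have h2 : HasDerivAt (fun t : ℝ => 2 * t / k + 2 / k ^ 2) (2 * 1 / k) t :=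
    (((hasDerivAt_id t).const_mul 2).div_const k).add_const _
  refine ((h1.const_mul A).mul h2).neg.congr_deriv ?_
  field_simp
  ring

lemma tendsto_tail_primitive (A k : ℝ) (hk : 0 < k) :
    Filter.Tendsto (fun t : ℝ => -(A * Real.exp (-k * t) * (2 * t / k + 2 / k ^ 2)))
      Filter.atTop (nhds 0) := by
  have hlin : Filter.Tendsto (fun t : ℝ => k * t) Filter.atTop Filter.atTop :=
    Filter.tendsto_id.const_mul_atTop hk
  have h1 := (Real.tendsto_pow_mul_exp_neg_atTop_nhds_zero 1).comp hlin
  have h0 := (Real.tendsto_pow_mul_exp_neg_atTop_nhds_zero 0).comp hlin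
  have h := (h1.add h0).const_mul (-(2 * A / k ^ 2))
  rw [add_zero, mul_zero] at h
  refine h.congr fun t => ?_
  simp only [Function.comp, pow_one, pow_zero, neg_mul]
  field_simp

/-- The layer-cake formula with the tail bounded by `1` below `t₀` and by `A e^{-kt}` above. -/
lemma lintegral_sq_le_of_tail {α : Type*} [MeasurableSpace α] (μ : Measure α)
    [IsProbabilityMeasure μ] (f : α → ℝ) (hf : Measurable f) (hf0 : ∀ x, 0 ≤ f x)
    (A k t₀ : ℝ) (hA : 0 < A) (hk : 0 < k) (ht₀ : 0 ≤ t₀)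
    (htail : ∀ γ : ℝ, 0 ≤ γ → μ {x | γ ≤ f x} ≤ ENNReal.ofReal (A * Real.exp (-k * γ))) :
    ∫⁻ x, ENNReal.ofReal (f x ^ 2) ∂μ ≤
      ENNReal.ofReal (t₀ ^ 2 + A * Real.exp (-k * t₀) * (2 * t₀ / k + 2 / k ^ 2)) := by
  have hsq : ∀ s : ℝ, ∫ t in (0 : ℝ)..s, 2 * t = s ^ 2 := fun s => by
    rw [intervalIntegral.integral_const_mul, integral_id]; ring
  have hcake := lintegral_comp_eq_lintegral_meas_le_mul μ (f := f) (g := fun t => 2 * t)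
    (Filter.Eventually.of_forall hf0) hf.aemeasurable
    (fun t _ => (continuous_const.mul continuous_id).intervalIntegrable 0 t)
    (by
      filter_upwards [ae_restrict_mem measurableSet_Ioi] with t ht
      have : (0 : ℝ) < t := ht
      positivity)
  simp only [hsq] at hcake
  rw [hcake, ← Set.Ioc_union_Ioi_eq_Ioi ht₀,
    lintegral_union measurableSet_Ioi (Set.Ioc_disjoint_Ioi le_rfl),
    ENNReal.ofReal_add (by positivity) (by positivity)]
  gcongr ?_ + ?_
  · calc ∫⁻ t in Set.Ioc 0 t₀, μ {x | t ≤ f x} * ENNReal.ofReal (2 * t)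
        ≤ ∫⁻ t in Set.Ioc 0 t₀, ENNReal.ofReal (2 * t) :=
          lintegral_mono fun t => mul_le_of_le_one_left zero_le prob_le_one
      _ = ENNReal.ofReal (∫ t in Set.Ioc 0 t₀, 2 * t) := by
          rw [ofReal_integral_eq_lintegral_ofReal]
          · exact (continuous_const.mul continuous_id).integrableOn_Ioc
          · filter_upwards [ae_restrict_mem measurableSet_Ioc] with t ht
            have : (0 : ℝ) < t := ht.1
            simp only [Pi.zero_apply]
            positivity
      _ ≤ ENNReal.ofReal (t₀ ^ 2) := by
          rw [← intervalIntegral.integral_of_le ht₀, hsq]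
  · have hnn : ∀ t ∈ Set.Ioi t₀, 0 ≤ A * Real.exp (-k * t) * (2 * t) := fun t ht => by
      have : 0 < t := lt_of_le_of_lt ht₀ ht
      positivity
    have hderiv := fun t (_ : t ∈ Set.Ici t₀) => hasDerivAt_tail_primitive A k hk t
    have hlim := tendsto_tail_primitive A k hk
    calc ∫⁻ t in Set.Ioi t₀, μ {x | t ≤ f x} * ENNReal.ofReal (2 * t)
        ≤ ∫⁻ t in Set.Ioi t₀, ENNReal.ofReal (A * Real.exp (-k * t) * (2 * t)) := by
          refine setLIntegral_mono' measurableSet_Ioi fun t ht => ?_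
          have : 0 < t := lt_of_le_of_lt ht₀ ht
          rw [ENNReal.ofReal_mul (p := A * Real.exp (-k * t)) (by positivity)]
          exact mul_le_mul' (htail t this.le) le_rfl
      _ = ENNReal.ofReal (∫ t in Set.Ioi t₀, A * Real.exp (-k * t) * (2 * t)) := by
          rw [ofReal_integral_eq_lintegral_ofReal]
          · exact integrableOn_Ioi_deriv_of_nonneg' hderiv hnn hlim
          · filter_upwards [ae_restrict_mem measurableSet_Ioi] with t ht using hnn t ht
      _ ≤ _ := by
          rw [integral_Ioi_of_hasDerivAt_of_nonneg' hderiv hnn hlim, zero_sub, neg_neg]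

/-- Exponential tail bounds imply a second-moment bound:
if `μ(‖θ − θ₀‖ ≥ γ) ≤ A e^{−kγ}` for all `γ ≥ 0`, with `0 < k ≤ 1` and `A ≥ e k²`,
then `∫ ‖θ − θ₀‖² dμ ≤ ((2 + 1/k) log(A/k²))²`. -/
theorem second_moment_of_exponential_tail
    (d : ℕ) (hd : 0 < d)
    (μ : Measure (EuclideanSpace ℝ (Fin d))) [IsProbabilityMeasure μ]
    (θ₀ : EuclideanSpace ℝ (Fin d))
    (A k : ℝ) (hA : 0 < A) (hk : 0 < k) (hk1 : k ≤ 1)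
    (hAk : Real.exp 1 * k ^ 2 ≤ A)
    (htail : ∀ γ : ℝ, 0 ≤ γ →
      μ {θ : EuclideanSpace ℝ (Fin d) | γ ≤ ‖θ - θ₀‖}
        ≤ ENNReal.ofReal (A * Real.exp (-k * γ))) :
    ∫ θ, ‖θ - θ₀‖ ^ 2 ∂μ ≤ ((2 + 1 / k) * Real.log (A / k ^ 2)) ^ 2 := by
  have hA1 : 1 ≤ A := by
    have h := htail 0 le_rfl
    simpa using h
  have hk2 : 0 < k ^ 2 := by positivity
  have ha : 0 ≤ Real.log A := Real.log_nonneg hA1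
  have hb : 0 ≤ -Real.log k := by linarith [Real.log_nonpos hk.le hk1]
  have hLeq : Real.log (A / k ^ 2) = Real.log A + 2 * (-Real.log k) := by
    rw [Real.log_div hA.ne' hk2.ne', Real.log_pow]; push_cast; ring
  have hL : 1 ≤ Real.log A + 2 * (-Real.log k) := by
    rw [← hLeq, Real.le_log_iff_exp_le (by positivity), le_div_iff₀ hk2]
    exact hAk
  have hmain := scalar_bound (Real.log A) (-Real.log k) k ha hb
    (by rw [neg_neg, Real.exp_log hk]) hL
  have hlint := lintegral_sq_le_of_tail μ (fun θ => ‖θ - θ₀‖) (by fun_prop)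
    (fun _ => norm_nonneg _) A k (Real.log A / k) hA hk (by positivity) htail
  -- At the crossover point `t₀ = log A / k` the exponential bound equals `1`.
  have hone : A * Real.exp (-k * (Real.log A / k)) = 1 := by
    rw [show -k * (Real.log A / k) = -Real.log A by field_simp, Real.exp_neg, Real.exp_log hA,
      mul_inv_cancel₀ hA.ne']
  rw [hone] at hlint
  rw [integral_eq_lintegral_of_nonneg_ae (Filter.Eventually.of_forall fun _ => by positivity)
    (by fun_prop)]
  refine ENNReal.toReal_le_of_le_ofReal (by positivity) (hlint.trans (ENNReal.ofReal_le_ofReal ?_))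
  rw [hLeq]
  calc (Real.log A / k) ^ 2 + 1 * (2 * (Real.log A / k) / k + 2 / k ^ 2)
      = ((Real.log A + 1) ^ 2 + 1) / k ^ 2 := by field_simp; ring
    _ ≤ ((2 * k + 1) * (Real.log A + 2 * (-Real.log k))) ^ 2 / k ^ 2 := by gcongr
    _ = ((2 + 1 / k) * (Real.log A + 2 * (-Real.log k))) ^ 2 := by field_simp
end

section
/- Let d be a positive integer, K > 0, m > 0, ρ > 0 with mρ ≥ 2(d − 1), let θ⋆ ∈ ℝ^d, and let F : ℝ^d → ℝ be a measurable function satisfying (i) F(θ) ≤ (K/2)‖θ − θ⋆‖² for all θ ∈ ℝ^d, and (ii) F(θ) ≥ (m/2)ρ² + mρ(‖θ − θ⋆‖ − ρ) for all θ with ‖θ − θ⋆‖ ≥ ρ. Then for every R ≥ ρ, the probability measure π on ℝ^d with Lebesgue density proportional to e^{−F} satisfies π({θ : ‖θ − θ⋆‖ ≥ R}) ≤ (K/(2π))^{d/2} · (2π^{d/2}/Γ(d/2)) · e^{mρ²/2} · (2/(mρ)) · e^{−mρR/2}. -/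
/-!
The numerator and the denominator are bounded separately. Hypothesis `hub` makes the normalizing
integral at least the Gaussian integral `(2π/K)^{d/2}`; if `e^{-F}` is not integrable, the quotient
is `0` by convention and there is nothing to prove. On `‖θ - θ⋆‖ ≥ R`, hypothesis `hlb` gives
`e^{-F} ≤ e^{mρ²/2} e^{-mρ‖θ - θ⋆‖}`, and polar coordinates turn the integral of the right side into
`|S^{d-1}| e^{mρ²/2} ∫_R^∞ r^{d-1} e^{-mρr} dr`. Since `r ≤ e^r` and `d - 1 ≤ mρ/2`, half of the
exponential absorbs the polynomial, `r^{d-1} ≤ e^{mρr/2}`, and what remains is the elementary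
integral `∫_R^∞ e^{-mρr/2} dr = (2/(mρ)) e^{-mρR/2}`.
-/

open MeasureTheory

/-- The surface measure of the unit sphere, in the form `d · vol(B(0,1))` in which polar
coordinates produce it. -/
lemma card_mul_volume_unit_ball (d : ℕ) (hd : 0 < d) :
    (d : ℝ) * volume.real (Metric.ball (0 : EuclideanSpace ℝ (Fin d)) 1)
      = 2 * Real.pi ^ ((d : ℝ) / 2) / Real.Gamma ((d : ℝ) / 2) := by
  have : Nonempty (Fin d) := ⟨⟨0, hd⟩⟩
  have hd' : (0 : ℝ) < d := by exact_mod_cast hd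
  have hG : 0 < Real.Gamma ((d : ℝ) / 2) := Real.Gamma_pos_of_pos (by positivity)
  have hs : √Real.pi ^ d = Real.pi ^ ((d : ℝ) / 2) := by
    rw [Real.sqrt_eq_rpow, ← Real.rpow_natCast, ← Real.rpow_mul Real.pi_pos.le]
    congr 1
    ring
  rw [Measure.real, EuclideanSpace.volume_ball]
  simp only [ENNReal.ofReal_one, one_pow, one_mul, Fintype.card_fin]
  rw [Real.Gamma_add_one (by positivity), ENNReal.toReal_ofReal (by positivity), hs]
  field_simp

/-- The polynomial factor of polar coordinates is absorbed by half of the exponential decay. -/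
lemma pow_mul_exp_le (d : ℕ) (hd : 0 < d) {a y : ℝ} (ha : 2 * ((d : ℝ) - 1) ≤ a) (hy : 0 ≤ y) :
    y ^ (d - 1) * Real.exp (-(a * y)) ≤ Real.exp (-(a / 2) * y) := by
  have h1 : y ^ (d - 1) ≤ Real.exp (a / 2 * y) := by
    calc y ^ (d - 1) ≤ Real.exp y ^ (d - 1) := by
          gcongr
          linarith [Real.add_one_le_exp y]
      _ = Real.exp (((d : ℝ) - 1) * y) := by
          rw [← Real.exp_nat_mul, Nat.cast_sub hd, Nat.cast_one]
      _ ≤ Real.exp (a / 2 * y) := by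
          gcongr
          linarith
  calc y ^ (d - 1) * Real.exp (-(a * y))
      ≤ Real.exp (a / 2 * y) * Real.exp (-(a * y)) := by gcongr
    _ = Real.exp (-(a / 2) * y) := by
        rw [← Real.exp_add]
        congr 1
        ring

/-- The radial tail integral, with the integrability that makes it meaningful. -/
lemma radial_tail (d : ℕ) (hd : 0 < d) {a R : ℝ} (ha0 : 0 < a) (ha : 2 * ((d : ℝ) - 1) ≤ a) :
    Integrable (fun x : EuclideanSpace ℝ (Fin d) =>
        (Set.Ici R).indicator (fun r => Real.exp (-(a * r))) ‖x‖) ∧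
      ∫ x : EuclideanSpace ℝ (Fin d), (Set.Ici R).indicator (fun r => Real.exp (-(a * r))) ‖x‖
        ≤ 2 * Real.pi ^ ((d : ℝ) / 2) / Real.Gamma ((d : ℝ) / 2)
          * (2 / a * Real.exp (-(a * R) / 2)) := by
  have : Nonempty (Fin d) := ⟨⟨0, hd⟩⟩
  have : Nontrivial (EuclideanSpace ℝ (Fin d)) := inferInstance
  set f : ℝ → ℝ := (Set.Ici R).indicator (fun r => Real.exp (-(a * r))) with hf
  set g : ℝ → ℝ := (Set.Ici R).indicator (fun r => Real.exp (-(a / 2) * r)) with hg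
  have hfm : Measurable f := Measurable.indicator (by fun_prop) measurableSet_Ici
  have hneg : -(a / 2) < 0 := by linarith
  have hgi : Integrable g := by
    rw [hg, integrable_indicator_iff measurableSet_Ici, integrableOn_Ici_iff_integrableOn_Ioi]
    exact integrableOn_exp_mul_Ioi hneg R
  have hf0 : ∀ y, 0 ≤ f y := fun y => Set.indicator_nonneg (fun _ _ => (Real.exp_pos _).le) y
  have hfg : ∀ y ∈ Set.Ioi (0 : ℝ), y ^ (d - 1) * f y ≤ g y := by
    intro y hy
    by_cases h : y ∈ Set.Ici R
    · simpa [hf, hg, h] using pow_mul_exp_le d hd ha (le_of_lt hy)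
    · simp [hf, hg, h]
  have hfi : IntegrableOn (fun y => y ^ (d - 1) * f y) (Set.Ioi 0) := by
    refine Integrable.mono' hgi.integrableOn (by fun_prop) ?_
    filter_upwards [ae_restrict_mem measurableSet_Ioi] with y hy
    rw [Real.norm_of_nonneg (mul_nonneg (pow_nonneg (le_of_lt hy) _) (hf0 y))]
    exact hfg y hy
  constructor
  · rw [integrable_fun_norm_addHaar volume (f := f)]
    simpa using hfi
  · rw [integral_fun_norm_addHaar volume f]
    simp only [finrank_euclideanSpace, Fintype.card_fin, nsmul_eq_mul, smul_eq_mul]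
    rw [← mul_assoc, card_mul_volume_unit_ball d hd]
    have hG : 0 < Real.Gamma ((d : ℝ) / 2) :=
      Real.Gamma_pos_of_pos (by have : (0 : ℝ) < d := by exact_mod_cast hd
                                positivity)
    gcongr
    calc ∫ y in Set.Ioi 0, y ^ (d - 1) * f y
        ≤ ∫ y in Set.Ioi 0, g y :=
          setIntegral_mono_on hfi hgi.integrableOn measurableSet_Ioi hfg
      _ ≤ ∫ y, g y := setIntegral_le_integral hgi
          (Filter.Eventually.of_forall fun y =>
            Set.indicator_nonneg (fun _ _ => (Real.exp_pos _).le) y)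
      _ = 2 / a * Real.exp (-(a * R) / 2) := by
          rw [hg, integral_indicator measurableSet_Ici, integral_Ici_eq_integral_Ioi,
            integral_exp_mul_Ioi hneg R]
          rw [show -(a / 2) * R = -(a * R) / 2 by ring]
          field_simp

/-- The normalizing integral dominates the Gaussian integral. -/
lemma le_integral_exp_neg (d : ℕ) {K : ℝ} (hK : 0 < K) (θstar : EuclideanSpace ℝ (Fin d))
    (F : EuclideanSpace ℝ (Fin d) → ℝ)
    (hub : ∀ θ : EuclideanSpace ℝ (Fin d), F θ ≤ K / 2 * ‖θ - θstar‖ ^ 2)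
    (hint : Integrable fun θ => Real.exp (-F θ)) :
    ((K / (2 * Real.pi)) ^ ((d : ℝ) / 2))⁻¹ ≤ ∫ θ, Real.exp (-F θ) := by
  have hpi := Real.pi_pos
  calc ((K / (2 * Real.pi)) ^ ((d : ℝ) / 2))⁻¹
      = ∫ θ : EuclideanSpace ℝ (Fin d), Real.exp (-(K / 2) * ‖θ‖ ^ 2) := by
        rw [GaussianFourier.integral_rexp_neg_mul_sq_norm (by positivity),
          ← Real.inv_rpow (by positivity), finrank_euclideanSpace, Fintype.card_fin]
        congr 1
        field_simp
    _ = ∫ θ : EuclideanSpace ℝ (Fin d), Real.exp (-(K / 2) * ‖θ - θstar‖ ^ 2) :=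
        (integral_sub_right_eq_self
          (fun θ : EuclideanSpace ℝ (Fin d) => Real.exp (-(K / 2) * ‖θ‖ ^ 2)) θstar).symm
    _ ≤ ∫ θ, Real.exp (-F θ) := by
        refine integral_mono_of_nonneg
          (Filter.Eventually.of_forall fun θ => (Real.exp_pos _).le) hint
          (Filter.Eventually.of_forall fun θ => Real.exp_le_exp.2 ?_)
        linarith [hub θ]

/-- Tail bound for a probability measure with density proportional to `e^{−F}`, when `F`
grows at most quadratically everywhere and at least linearly outside a ball of radius `ρ`. -/
theorem gibbs_tail_bound
    (d : ℕ) (hd : 0 < d)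
    (K m ρ : ℝ) (hK : 0 < K) (hm : 0 < m) (hρ : 0 < ρ)
    (hmρ : 2 * ((d : ℝ) - 1) ≤ m * ρ)
    (θstar : EuclideanSpace ℝ (Fin d))
    (F : EuclideanSpace ℝ (Fin d) → ℝ) (hF : Measurable F)
    (hub : ∀ θ : EuclideanSpace ℝ (Fin d), F θ ≤ K / 2 * ‖θ - θstar‖ ^ 2)
    (hlb : ∀ θ : EuclideanSpace ℝ (Fin d), ρ ≤ ‖θ - θstar‖ →
      m / 2 * ρ ^ 2 + m * ρ * (‖θ - θstar‖ - ρ) ≤ F θ) :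
    ∀ R : ℝ, ρ ≤ R →
      (∫ θ in {θ : EuclideanSpace ℝ (Fin d) | R ≤ ‖θ - θstar‖}, Real.exp (-F θ))
          / (∫ θ : EuclideanSpace ℝ (Fin d), Real.exp (-F θ))
        ≤ (K / (2 * Real.pi)) ^ ((d : ℝ) / 2)
            * (2 * Real.pi ^ ((d : ℝ) / 2) / Real.Gamma ((d : ℝ) / 2))
            * Real.exp (m * ρ ^ 2 / 2) * (2 / (m * ρ))
            * Real.exp (-(m * ρ * R) / 2) := by
  intro R hR
  have hG : 0 < Real.Gamma ((d : ℝ) / 2) :=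
    Real.Gamma_pos_of_pos (by have : (0 : ℝ) < d := by exact_mod_cast hd
                              positivity)
  have hpi := Real.pi_pos
  by_cases hint : Integrable fun θ => Real.exp (-F θ)
  swap
  · -- The quotient is `_ / 0 = 0`, by the conventions for Bochner integrals and division.
    rw [integral_undef hint, div_zero]
    positivity
  set c : ℝ := (K / (2 * Real.pi)) ^ ((d : ℝ) / 2) with hc
  have hc0 : 0 < c := by positivity
  have hden := le_integral_exp_neg d hK θstar F hub hint
  obtain ⟨hri, hrle⟩ := radial_tail d hd (mul_pos hm hρ) hmρ (R := R)
  set f : ℝ → ℝ := (Set.Ici R).indicator (fun r => Real.exp (-(m * ρ * r))) with hf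
  have hS : MeasurableSet {θ : EuclideanSpace ℝ (Fin d) | R ≤ ‖θ - θstar‖} :=
    measurableSet_le measurable_const (by fun_prop)
  have hnum : ∫ θ in {θ : EuclideanSpace ℝ (Fin d) | R ≤ ‖θ - θstar‖}, Real.exp (-F θ)
      ≤ Real.exp (m * ρ ^ 2 / 2) * ∫ x : EuclideanSpace ℝ (Fin d), f ‖x‖ := by
    rw [← integral_indicator hS,
      ← integral_sub_right_eq_self (fun x : EuclideanSpace ℝ (Fin d) => f ‖x‖) θstar,
      ← integral_const_mul]
    refine integral_mono (hint.indicator hS) ((hri.comp_sub_right θstar).const_mul _) ?_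
    intro θ
    by_cases h : R ≤ ‖θ - θstar‖
    · simp only [hf, Set.indicator, Set.mem_ofPred_eq, Set.mem_Ici, h, if_true]
      rw [← Real.exp_add]
      exact Real.exp_le_exp.2 (by linarith [hlb θ (hR.trans h)])
    · simp [hf, Set.indicator, h]
  rw [div_le_iff₀ ((inv_pos.2 hc0).trans_le hden)]
  set A : ℝ := 2 * Real.pi ^ ((d : ℝ) / 2) / Real.Gamma ((d : ℝ) / 2) with hA
  have hA0 : 0 < A := by positivity
  calc ∫ θ in {θ : EuclideanSpace ℝ (Fin d) | R ≤ ‖θ - θstar‖}, Real.exp (-F θ)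
      ≤ Real.exp (m * ρ ^ 2 / 2) * (A * (2 / (m * ρ) * Real.exp (-(m * ρ * R) / 2))) :=
        hnum.trans (by gcongr)
    _ = c * A * Real.exp (m * ρ ^ 2 / 2) * (2 / (m * ρ)) * Real.exp (-(m * ρ * R) / 2) * c⁻¹ := by
        field_simp
    _ ≤ _ := by gcongr
end
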